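/- Let p < q be reals, let 1 ≤ r ≤ n be integers, let f be (n+1)-times continuously differentiable on [p,q], and let x, x_0, …, x_n be pairwise distinct points of [p,q]. Then there exists ξ in the smallest closed interval containing x, x_0, …, x_n such that f(x) = Σ_{i=0}^{r−1} f[x_0, …, x_i]·∏_{j=0}^{i−1}(x − x_j) + D_{r,r+1,…,n}[x]·∏_{i=0}^{r−1}(x − x_i) + (f^{(n+1)}(ξ)/(n+1)!)·∏_{i=0}^{n}(x − x_i). -/

import Mathlib

/-- Divided difference `f[y i, y (i+1), …, y j]` defined by the standard recursion
`f[y_i,…,y_j] = (f[y_{i+1},…,y_j] − f[y_i,…,y_{j−1}])/(y_j − y_i)`. -/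
noncomputable def divDiff (f : ℝ → ℝ) (y : ℕ → ℝ) (i j : ℕ) : ℝ :=
  if _h : j ≤ i then f (y i)
  else (divDiff f y (i + 1) j - divDiff f y i (j - 1)) / (y j - y i)
termination_by j - i
decreasing_by all_goals omega

/-- Neville iteration: `neville xs x g i j` is the iterate built from the initial
values `g j` (at node `xs j`) over the nodes `xs j, …, xs (j+i)`. -/
noncomputable def neville (xs : ℕ → ℝ) (x : ℝ) (g : ℕ → ℝ) : ℕ → ℕ → ℝ
  | 0, j => g j
  | i + 1, j =>
      ((xs (i + 1 + j) - x) * neville xs x g i j - (xs j - x) * neville xs x g i (j + 1)) /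
        (xs (i + 1 + j) - xs j)

/-- Aitken iteration with base index `r`: `aitken xs x g r i j` is the iterate
`d_{r,r+1,…,i,j}` (for `r ≤ i < j`) built from the initial values `g j` at the nodes `xs j`. -/
noncomputable def aitken (xs : ℕ → ℝ) (x : ℝ) (g : ℕ → ℝ) (r : ℕ) (i j : ℕ) : ℝ :=
  if _h : i ≤ r then ((xs j - x) * g r - (xs r - x) * g j) / (xs j - xs r)
  else ((xs j - x) * aitken xs x g r (i - 1) i - (xs i - x) * aitken xs x g r (i - 1) j) /
        (xs j - xs i)
termination_by i
decreasing_by all_goals omega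

/-- The full Aitken iterate `d_{r,r+1,…,n}` (equal to the initial value when `n = r`). -/
noncomputable def aitkenLast (xs : ℕ → ℝ) (x : ℝ) (g : ℕ → ℝ) (r n : ℕ) : ℝ :=
  if n ≤ r then g n else aitken xs x g r (n - 1) n

/-- Confluent divided difference `g[x,…,x (m times), xi]`, defined using
`g[x,…,x (m times)] = g^{(m−1)}(x)/(m−1)!` and `g[xi] = g xi`. -/
noncomputable def confDD (g : ℝ → ℝ) (x xi : ℝ) : ℕ → ℝ
  | 0 => g xi
  | m + 1 => (confDD g x xi m - iteratedDeriv m g x / (Nat.factorial m : ℝ)) / (xi - x)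

/-!
The value `f[t, x₀, …, x_{r-1}]` is the factor `g t` in `f = N + g · ∏ (· - x_i)`, where `N` is the
Newton interpolant of `f` at `x₀, …, x_{r-1}`. Neville's scheme evaluates the Lagrange interpolant
`Q` of `g` at `x_r, …, x_n`, so `N + Q · ∏ (· - x_i)` takes the values of `f` at all of
`x₀, …, x_n`, and its degree is at most `n`: it is the Lagrange interpolant of `f`. What remains is
the classical error term. Add to the interpolant the multiple of `∏_{i ≤ n} (· - x_i)` that makes it
agree with `f` at `x` as well; by Rolle's theorem the `(n+1)`-st derivatives then agree at some `ξ`.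
-/

section Interpolation

open Finset Polynomial Lagrange

variable {F ι : Type*} [Field F]

lemma coeff_nodal_card {R : Type*} [CommRing R] (s : Finset ι) (v : ι → R) :
    (nodal s v).coeff #s = 1 := by
  nontriviality R
  simpa only [natDegree_nodal] using (nodal_monic (s := s) (v := v)).coeff_natDegree

lemma coeff_mul_basisDivisor_succ {P : F[X]} {m : ℕ} (hP : P.degree < (m + 1 : ℕ)) (a b : F) :
    (P * basisDivisor a b).coeff (m + 1) = P.coeff m / (a - b) := by
  have hP_coeff : P.coeff (m + 1) = 0 := coeff_eq_zero_of_degree_lt hP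
  rw [basisDivisor, mul_left_comm, coeff_C_mul, mul_sub, coeff_sub, coeff_mul_X, coeff_mul_C,
    hP_coeff, zero_mul, sub_zero, div_eq_inv_mul]

lemma interpolate_Icc_succ {v g : ℕ → F} {i j : ℕ} (hij : i ≤ j)
    (hv : Set.InjOn v (Icc i (j + 1))) :
    interpolate (Icc i (j + 1)) v g =
      interpolate (Icc i j) v g * basisDivisor (v i) (v (j + 1)) +
        interpolate (Icc (i + 1) (j + 1)) v g * basisDivisor (v (j + 1)) (v i) := by
  have erase_right : (Icc i (j + 1)).erase (j + 1) = Icc i j := by grind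
  have erase_left : (Icc i (j + 1)).erase i = Icc (i + 1) (j + 1) := by grind
  rw [interpolate_eq_add_interpolate_erase g hv (i := i) (j := j + 1) (by grind) (by grind)
    (by lia), erase_right, erase_left]

variable [DecidableEq ι] {v g : ι → F} {s t : Finset ι}

lemma interpolate_insert {i : ι} (hi : i ∉ s) (hv : Set.InjOn v (insert i s : Finset ι)) :
    interpolate (insert i s) v g =
      interpolate s v g + C ((interpolate (insert i s) v g).coeff #s) * nodal s v := by
  rw [← sub_eq_iff_eq_add]
  refine eq_interpolate_of_eval_eq g (hv.mono (by simp)) ?_ fun k hk => ?_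
  · refine (degree_lt_iff_coeff_zero _ _).2 fun m hm => ?_
    obtain rfl | hlt := hm.eq_or_lt
    · rw [coeff_sub, coeff_C_mul, coeff_nodal_card, mul_one, sub_self]
    · have hdeg : (interpolate (insert i s) v g).degree < m :=
        (degree_interpolate_lt g hv).trans_le <| by
          rw [card_insert_of_notMem hi]; exact_mod_cast hlt
      have hnodal : (nodal s v).degree < m := by rw [degree_nodal]; exact_mod_cast hlt
      rw [coeff_sub, coeff_C_mul, coeff_eq_zero_of_degree_lt hdeg,
        coeff_eq_zero_of_degree_lt hnodal, mul_zero, sub_zero]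
  · rw [eval_sub, eval_interpolate_at_node g hv (mem_insert_of_mem hk), eval_mul,
      eval_nodal_at_node hk, mul_zero, sub_zero]

lemma interpolate_union {h : ι → F} (hst : Disjoint s t)
    (hv : Set.InjOn v (s ∪ t : Finset ι))
    (hg : ∀ k ∈ t, g k = (interpolate s v g).eval (v k) + h k * (nodal s v).eval (v k)) :
    interpolate (s ∪ t) v g = interpolate s v g + interpolate t v h * nodal s v := by
  have hvs : Set.InjOn v s := hv.mono (by simp)
  have hvt : Set.InjOn v t := hv.mono (by simp)
  symm
  refine eq_interpolate_of_eval_eq g hv ?_ fun k hk => ?_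
  · rw [card_union_of_disjoint hst]
    refine (degree_add_le _ _).trans_lt (max_lt ?_ ?_)
    · exact (degree_interpolate_lt g hvs).trans_le (by exact_mod_cast Nat.le_add_right _ _)
    · rw [degree_mul, degree_nodal, add_comm, Nat.cast_add]
      exact WithBot.add_lt_add_left (WithBot.natCast_ne_bot _) (degree_interpolate_lt h hvt)
  · rw [eval_add, eval_mul]
    obtain hks | hkt := mem_union.1 hk
    · rw [eval_interpolate_at_node g hvs hks, eval_nodal_at_node hks, mul_zero, add_zero]
    · rw [eval_interpolate_at_node h hvt hkt, ← hg k hkt]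

end Interpolation

section DividedDifferences

open Finset Polynomial Lagrange

variable {f : ℝ → ℝ} {y : ℕ → ℝ}

lemma divDiff_self (f : ℝ → ℝ) (y : ℕ → ℝ) (i : ℕ) : divDiff f y i i = f (y i) := by
  rw [divDiff, dif_pos le_rfl]

lemma divDiff_succ_right {i j : ℕ} (hij : i ≤ j) :
    divDiff f y i (j + 1) =
      (divDiff f y (i + 1) (j + 1) - divDiff f y i j) / (y (j + 1) - y i) := by
  rw [divDiff, dif_neg (by lia), Nat.add_sub_cancel]

lemma divDiff_succ_succ {i j : ℕ} (hij : i ≤ j) :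
    divDiff f y (i + 1) (j + 1) = divDiff f (fun k => y (k + 1)) i j := by
  obtain ⟨m, rfl⟩ := Nat.exists_eq_add_of_le hij
  induction m generalizing i with
  | zero => simp only [add_zero, divDiff_self]
  | succ m ih =>
    have ih_right := ih (i := i + 1) (by lia)
    rw [add_right_comm i 1 m] at ih_right
    rw [← add_assoc, divDiff_succ_right (by lia), ih_right, ih (by lia),
      divDiff_succ_right (i := i) (by lia)]

lemma divDiff_eq_coeff_interpolate {i m : ℕ} (hy : Set.InjOn y (Icc i (i + m))) :
    divDiff f y i (i + m) = (interpolate (Icc i (i + m)) y (f ∘ y)).coeff m := by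
  induction m generalizing i with
  | zero => simp [divDiff_self]
  | succ m ih =>
    rw [← add_assoc] at hy ⊢
    have hleft : Set.InjOn y (Icc i (i + m)) := hy.mono (by grind)
    have hright : Set.InjOn y (Icc (i + 1) (i + m + 1)) := hy.mono (by grind)
    have hdeg_left := degree_interpolate_lt (f ∘ y) hleft
    have hdeg_right := degree_interpolate_lt (f ∘ y) hright
    rw [Nat.card_Icc, show i + m + 1 - i = m + 1 by lia] at hdeg_left
    rw [Nat.card_Icc, show i + m + 1 + 1 - (i + 1) = m + 1 by lia] at hdeg_right
    have ih_right := ih (i := i + 1) (by rwa [add_right_comm])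
    rw [add_right_comm] at ih_right
    rw [divDiff_succ_right (by lia), ih hleft, ih_right, interpolate_Icc_succ (by lia) hy,
      coeff_add, coeff_mul_basisDivisor_succ hdeg_left, coeff_mul_basisDivisor_succ hdeg_right,
      ← neg_sub (y (i + m + 1)) (y i), div_neg, neg_add_eq_sub, sub_div]

lemma interpolate_range_eq_sum_divDiff_mul_nodal {r : ℕ} (hy : Set.InjOn y (range r)) :
    interpolate (range r) y (f ∘ y) =
      ∑ i ∈ range r, C (divDiff f y 0 i) * nodal (range i) y := by
  induction r with
  | zero => simp
  | succ r ih =>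
    have hIcc : Icc 0 (0 + r) = insert r (range r) := by grind
    have hcoeff := divDiff_eq_coeff_interpolate (f := f) (y := y) (i := 0) (m := r)
      (hy.mono (by grind))
    rw [hIcc, zero_add] at hcoeff
    rw [sum_range_succ, ← ih (hy.mono (by grind)), hcoeff, range_add_one]
    rw [range_add_one] at hy
    simpa only [card_range] using interpolate_insert notMem_range_self hy

lemma eq_sum_divDiff_add_divDiff_mul_prod {r : ℕ} (hy : ∀ i < r, y (i + 1) ≠ y 0) :
    f (y 0) = (∑ i ∈ range r, divDiff f (fun k => y (k + 1)) 0 i *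
        ∏ j ∈ range i, (y 0 - y (j + 1))) +
      divDiff f y 0 r * ∏ j ∈ range r, (y 0 - y (j + 1)) := by
  induction r with
  | zero => simp [divDiff_self]
  | succ r ih =>
    have hne : y (r + 1) - y 0 ≠ 0 := sub_ne_zero.2 (hy r r.lt_succ_self)
    rw [ih fun i hi => hy i (by lia), sum_range_succ, prod_range_succ,
      divDiff_succ_right r.zero_le, divDiff_succ_succ r.zero_le]
    field_simp
    ring

lemma neville_eq_eval_interpolate {g : ℕ → ℝ} {i j : ℕ} (hy : Set.InjOn y (Icc j (i + j)))
    (x : ℝ) : neville y x g i j = (interpolate (Icc j (i + j)) y g).eval x := by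
  induction i generalizing j with
  | zero => simp [neville]
  | succ i ih =>
    rw [add_right_comm] at hy
    have hne : y (i + j + 1) - y j ≠ 0 :=
      sub_ne_zero.2 fun h => by have := hy (by grind) (by grind) h; lia
    have ih_right := ih (j := j + 1) (hy.mono (by grind))
    rw [neville, ih (hy.mono (by grind)), ih_right, add_right_comm, ← add_assoc,
      interpolate_Icc_succ (by lia) hy, basisDivisor, basisDivisor]
    simp only [eval_add, eval_mul, eval_C, eval_sub, eval_X]
    rw [← neg_sub (y (i + j + 1)) (y j), inv_neg]
    field_simp
    ring

lemma eval_interpolate_range_eq_sum_divDiff_add_neville {r n : ℕ} (hrn : r ≤ n)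
    (hy : Set.InjOn y (range (n + 1))) (x : ℝ) :
    (interpolate (range (n + 1)) y (f ∘ y)).eval x =
      (∑ i ∈ range r, divDiff f y 0 i * ∏ j ∈ range i, (x - y j)) +
        neville y x (fun j => divDiff f (fun i => if i = 0 then y j else y (i - 1)) 0 r)
          (n - r) r * ∏ i ∈ range r, (x - y i) := by
  have hunion : range (n + 1) = range r ∪ Icc r n := by grind
  have hr : Set.InjOn y (range r) := hy.mono (by grind)
  have newton (t : ℝ) : (interpolate (range r) y (f ∘ y)).eval t =
      ∑ i ∈ range r, divDiff f y 0 i * ∏ j ∈ range i, (t - y j) := by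
    simp only [interpolate_range_eq_sum_divDiff_mul_nodal hr, eval_finsetSum, eval_mul, eval_C,
      eval_nodal]
  rw [neville_eq_eval_interpolate (hy.mono (by grind)), Nat.sub_add_cancel hrn, ← newton,
    ← eval_nodal, ← eval_mul, ← eval_add, hunion,
    interpolate_union (by grind [disjoint_left]) (hunion ▸ hy) fun k hk => ?_]
  -- The Newton formula with remainder at the node `y k`, for the sequence `y k, y 0, y 1, …`.
  rw [newton, eval_nodal]
  refine eq_sum_divDiff_add_divDiff_mul_prod (f := f)
    (y := fun i => if i = 0 then y k else y (i - 1)) fun i hi heq => ?_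
  have := hy (by grind) (by grind) heq
  grind

end DividedDifferences

section InterpolationError

open Finset Polynomial Lagrange

variable {f : ℝ → ℝ} {S : Set ℝ} {m : ℕ}

lemma exists_mem_Icc_iteratedDerivWithin_eq_zero (hS : S.OrdConnected) (hS' : UniqueDiffOn ℝ S)
    (hf : ContDiffOn ℝ m f S) {z : Fin (m + 1) → ℝ} (hz : StrictMono z) (hzS : ∀ i, z i ∈ S)
    (hfz : ∀ i, f (z i) = 0) :
    ∃ ξ ∈ Set.Icc (z 0) (z (Fin.last m)), iteratedDerivWithin m f S ξ = 0 := by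
  induction m generalizing f with
  | zero => exact ⟨z 0, by simp, by simpa using hfz 0⟩
  | succ m ih =>
    have rolle (i : Fin (m + 1)) :
        ∃ c ∈ Set.Ioo (z i.castSucc) (z i.succ), derivWithin f S c = 0 := by
      have hsub : Set.Icc (z i.castSucc) (z i.succ) ⊆ S := hS.out (hzS _) (hzS _)
      obtain ⟨c, hc, hfc⟩ := exists_deriv_eq_zero (hz i.castSucc_lt_succ)
        (hf.continuousOn.mono hsub) ((hfz _).trans (hfz _).symm)
      exact ⟨c, hc, (derivWithin_of_mem_nhds
        (Filter.mem_of_superset (Icc_mem_nhds hc.1 hc.2) hsub)).trans hfc⟩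
    choose c hc hfc using rolle
    have hc_mono : StrictMono c := Fin.strictMono_iff_lt_succ.2 fun i =>
      (hc i.castSucc).2.trans (hc i.succ).1
    obtain ⟨ξ, hξ, hfξ⟩ := ih (hf.derivWithin hS' (by norm_cast)) hc_mono
      (fun i => hS.out (hzS _) (hzS _) (Set.Ioo_subset_Icc_self (hc i))) hfc
    refine ⟨ξ, ⟨(hc 0).1.le.trans hξ.1, hξ.2.trans (hc (Fin.last m)).2.le⟩, ?_⟩
    rwa [iteratedDerivWithin_succ']

lemma exists_mem_convexHull_iteratedDerivWithin_eq_zero (hS : S.OrdConnected)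
    (hS' : UniqueDiffOn ℝ S) (hf : ContDiffOn ℝ m f S) {s : Finset ℝ} (hs : #s = m + 1)
    (hsS : ↑s ⊆ S) (hfs : ∀ a ∈ s, f a = 0) :
    ∃ ξ ∈ convexHull ℝ (s : Set ℝ), iteratedDerivWithin m f S ξ = 0 := by
  have hmem (i : Fin (m + 1)) : s.orderEmbOfFin hs i ∈ s := s.orderEmbOfFin_mem hs i
  obtain ⟨ξ, hξ, hfξ⟩ := exists_mem_Icc_iteratedDerivWithin_eq_zero hS hS' hf
    (s.orderEmbOfFin hs).strictMono (fun i => hsS (hmem i)) (fun i => hfs _ (hmem i))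
  exact ⟨ξ, (convex_convexHull ℝ _).ordConnected.out (subset_convexHull ℝ _ (hmem _))
    (subset_convexHull ℝ _ (hmem _)) hξ, hfξ⟩

lemma iteratedDeriv_eval {𝕜 : Type*} [NontriviallyNormedField 𝕜] (P : 𝕜[X]) (m : ℕ) :
    iteratedDeriv m (fun t => P.eval t) = fun t => (derivative^[m] P).eval t := by
  induction m with
  | zero => simp
  | succ m ih => ext t; rw [iteratedDeriv_succ, ih, Function.iterate_succ_apply', Polynomial.deriv]

lemma eval_iterate_derivative_of_natDegree_le {R : Type*} [CommSemiring R] {P : R[X]}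
    (hP : P.natDegree ≤ m) (t : R) :
    (derivative^[m] P).eval t = m.factorial * P.coeff m := by
  have hconst : (derivative^[m] P).natDegree = 0 := by
    have := natDegree_iterate_derivative P m
    lia
  rw [eq_C_of_natDegree_eq_zero hconst, eval_C, coeff_iterate_derivative, zero_add,
    Nat.descFactorial_self, nsmul_eq_mul]

lemma exists_iteratedDerivWithin_eq_factorial_mul_coeff (hS : S.OrdConnected)
    (hS' : UniqueDiffOn ℝ S) (hf : ContDiffOn ℝ m f S) {s : Finset ℝ} (hs : #s = m + 1)
    (hsS : ↑s ⊆ S) {P : ℝ[X]} (hP : P.natDegree ≤ m) (hPs : ∀ a ∈ s, P.eval a = f a) :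
    ∃ ξ ∈ convexHull ℝ (s : Set ℝ), iteratedDerivWithin m f S ξ = m.factorial * P.coeff m := by
  have hP_smooth : ContDiff ℝ m (fun t => P.eval t) := by simpa using P.contDiff_aeval (𝕜 := ℝ) m
  obtain ⟨ξ, hξ, hfξ⟩ := exists_mem_convexHull_iteratedDerivWithin_eq_zero hS hS'
    (hf.sub hP_smooth.contDiffOn) hs hsS fun a ha => sub_eq_zero.2 (hPs a ha).symm
  have hξS : ξ ∈ S := convexHull_min hsS hS.convex hξ
  refine ⟨ξ, hξ, ?_⟩
  rw [← eval_iterate_derivative_of_natDegree_le hP ξ, ← congrFun (iteratedDeriv_eval P m) ξ,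
    ← iteratedDerivWithin_eq_iteratedDeriv hS' hP_smooth.contDiffAt hξS, ← sub_eq_zero]
  rwa [← iteratedDerivWithin_sub hξS hS' (hf ξ hξS) hP_smooth.contDiffWithinAt]

lemma exists_eq_eval_add_iteratedDerivWithin_mul_prod (hS : S.OrdConnected)
    (hS' : UniqueDiffOn ℝ S) (hf : ContDiffOn ℝ m f S) {s : Finset ℝ} (hs : #s = m) (hsS : ↑s ⊆ S)
    {x : ℝ} (hx : x ∈ S) (hxs : x ∉ s) {P : ℝ[X]} (hP : P.degree < m)
    (hPs : ∀ a ∈ s, P.eval a = f a) :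
    ∃ ξ ∈ convexHull ℝ (insert x (s : Set ℝ)),
      f x = P.eval x + iteratedDerivWithin m f S ξ / m.factorial * ∏ a ∈ s, (x - a) := by
  subst hs
  have hprod : ∏ a ∈ s, (x - a) ≠ 0 :=
    prod_ne_zero_iff.2 fun a ha => sub_ne_zero.2 fun h => hxs (h ▸ ha)
  set K : ℝ := (f x - P.eval x) / ∏ a ∈ s, (x - a)
  have hfx : f x = P.eval x + K * ∏ a ∈ s, (x - a) := by
    rw [div_mul_cancel₀ _ hprod, add_sub_cancel]
  let Q : ℝ[X] := P + C K * nodal s id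
  have hQ_deg : Q.natDegree ≤ #s := by
    refine natDegree_add_le_of_degree_le (natDegree_le_of_degree_le hP.le) ?_
    exact (natDegree_C_mul_le _ _).trans natDegree_nodal.le
  have hQ_coeff : Q.coeff #s = K := by
    rw [coeff_add, coeff_C_mul, coeff_nodal_card, coeff_eq_zero_of_degree_lt hP, zero_add, mul_one]
  have hQ_eval (t : ℝ) : Q.eval t = P.eval t + K * ∏ a ∈ s, (t - a) := by
    simp only [Q, eval_add, eval_mul, eval_C, eval_nodal, id]
  have hQ_interp : ∀ a ∈ insert x s, Q.eval a = f a := by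
    refine (forall_mem_insert _ _ _).2 ⟨(hQ_eval x).trans hfx.symm, fun a ha => ?_⟩
    rw [hQ_eval, prod_eq_zero ha (sub_self a), mul_zero, add_zero, hPs a ha]
  obtain ⟨ξ, hξ, hfξ⟩ := exists_iteratedDerivWithin_eq_factorial_mul_coeff hS hS' hf
    (card_insert_of_notMem hxs) (by simpa using Set.insert_subset hx hsS) hQ_deg hQ_interp
  refine ⟨ξ, by simpa using hξ, ?_⟩
  rw [hfξ, hQ_coeff, mul_div_cancel_left₀ _ (by positivity), hfx]

lemma uniqueDiffOn_of_ordConnected_of_nontrivial (hS : S.OrdConnected) (hS' : S.Nontrivial) :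
    UniqueDiffOn ℝ S := by
  obtain ⟨a, ha, b, hb, hab⟩ := hS'.exists_lt
  have hsub : Set.Ioo a b ⊆ S := Set.Ioo_subset_Icc_self.trans (hS.out ha hb)
  exact uniqueDiffOn_convex hS.convex
    ((Set.nonempty_Ioo.2 hab).mono (interior_maximal hsub isOpen_Ioo))

end InterpolationError

theorem stmt_2_general {S : Set ℝ} (hS : S.OrdConnected) {r n : ℕ} (hrn : r ≤ n)
    {f : ℝ → ℝ} (hf : ContDiffOn ℝ (n + 1 : ℕ) f S) {x : ℝ} {X : ℕ → ℝ}
    (hx : x ∈ S) (hX : ∀ i ≤ n, X i ∈ S) (hxX : ∀ i ≤ n, X i ≠ x)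
    (hXX : Set.InjOn X (Set.Iic n)) :
    ∃ ξ ∈ convexHull ℝ (insert x (X '' Set.Iic n)),
      f x = (∑ i ∈ Finset.range r, divDiff f X 0 i * ∏ j ∈ Finset.range i, (x - X j))
        + neville X x (fun j => divDiff f (fun i => if i = 0 then X j else X (i - 1)) 0 r)
            (n - r) r * ∏ i ∈ Finset.range r, (x - X i)
        + iteratedDerivWithin (n + 1) f S ξ / (Nat.factorial (n + 1) : ℝ)
            * ∏ i ∈ Finset.range (n + 1), (x - X i) := by
  have hS_diff : UniqueDiffOn ℝ S := uniqueDiffOn_of_ordConnected_of_nontrivial hS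
    ⟨X 0, hX 0 n.zero_le, x, hx, hxX 0 n.zero_le⟩
  have hrange : (Finset.range (n + 1) : Set ℕ) = Set.Iic n := by ext; simp
  have hinj : Set.InjOn X (Finset.range (n + 1)) := hrange ▸ hXX
  have hnodes : ((Finset.range (n + 1)).image X : Set ℝ) = X '' Set.Iic n := by
    rw [Finset.coe_image, hrange]
  have hcard : ((Finset.range (n + 1)).image X).card = n + 1 := by
    rw [Finset.card_image_of_injOn hinj, Finset.card_range]
  obtain ⟨ξ, hξ, hfx⟩ := exists_eq_eval_add_iteratedDerivWithin_mul_prod hS hS_diff hf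
    (P := Lagrange.interpolate (.range (n + 1)) X (f ∘ X)) hcard
    (hnodes ▸ Set.image_subset_iff.2 hX) hx (by simpa using hxX)
    (by simpa only [Finset.card_range] using Lagrange.degree_interpolate_lt (f ∘ X) hinj)
    (Finset.forall_mem_image.2 fun i hi => Lagrange.eval_interpolate_at_node (f ∘ X) hinj hi)
  refine ⟨ξ, hnodes ▸ hξ, ?_⟩
  rw [hfx, eval_interpolate_range_eq_sum_divDiff_add_neville hrn hinj, Finset.prod_image hinj]

theorem stmt_2 (p q : ℝ) (hpq : p < q) (r n : ℕ) (hr : 1 ≤ r) (hrn : r ≤ n)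
    (f : ℝ → ℝ) (hf : ContDiffOn ℝ (n + 1 : ℕ) f (Set.Icc p q))
    (x : ℝ) (X : ℕ → ℝ)
    (hx : x ∈ Set.Icc p q) (hX : ∀ i ≤ n, X i ∈ Set.Icc p q)
    (hxX : ∀ i ≤ n, X i ≠ x)
    (hXX : ∀ i j, i ≤ n → j ≤ n → i ≠ j → X i ≠ X j) :
    ∃ ξ ∈ convexHull ℝ (insert x (X '' Set.Iic n)),
      f x = (∑ i ∈ Finset.range r, divDiff f X 0 i * ∏ j ∈ Finset.range i, (x - X j))
        + neville X x (fun j => divDiff f (fun i => if i = 0 then X j else X (i - 1)) 0 r) (n - r) r * ∏ i ∈ Finset.range r, (x - X i)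
        + iteratedDerivWithin (n + 1) f (Set.Icc p q) ξ / (Nat.factorial (n + 1) : ℝ)
            * ∏ i ∈ Finset.range (n + 1), (x - X i) := by
  exact stmt_2_general Set.ordConnected_Icc hrn hf hx hX hxX fun i hi j hj hij =>
    by_contra fun hne => hXX i j hi hj hne hij
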